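/- There exists an infinite minimal language-connected subshift X over {0,1} such that the topological entropy of the shift map σ restricted to X is zero. -/

import Mathlib

/-!
There exists an infinite minimal language-connected subshift over `{0,1}` whose
topological entropy is zero. Topological entropy of the shift restricted to a
subshift `X` is `lim_n (1/n) log |Lang X n|` (the limit exists by subadditivity).
-/

/-- The shift map `σ` on the full shift `{0,1}^ℤ`, `(σ x) n = x (n + 1)`. -/
def shiftMap (x : ℤ → Bool) : ℤ → Bool := fun n => x (n + 1)

/-- A subshift: a nonempty closed shift-invariant subset of the full shift. -/
def IsSubshift (X : Set (ℤ → Bool)) : Prop :=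
  X.Nonempty ∧ IsClosed X ∧ shiftMap '' X = X

/-- A subshift is minimal if it contains no nonempty closed shift-invariant proper subset. -/
def IsMinimalSubshift (X : Set (ℤ → Bool)) : Prop :=
  IsSubshift X ∧ ∀ Y ⊆ X, IsClosed Y → shiftMap '' Y = Y → Y.Nonempty → Y = X

/-- `Lang X n` is the set of words of length `n` occurring in points of `X`. -/
def Lang (X : Set (ℤ → Bool)) (n : ℕ) : Set (Fin n → Bool) :=
  {w | ∃ x ∈ X, ∀ k : Fin n, w k = x ((k : ℕ) : ℤ)}

/-- A set of words `W ⊆ {0,1}^n` is Hamming-connected: any two words of `W` are joined by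
a path inside `W` whose consecutive words differ in exactly one position. -/
def HammingConnected {n : ℕ} (W : Set (Fin n → Bool)) : Prop :=
  ∀ u ∈ W, ∀ v ∈ W,
    Relation.ReflTransGen (fun a b => a ∈ W ∧ b ∈ W ∧ hammingDist a b = 1) u v

/-- A subshift is language-connected if `Lang X n` is Hamming-connected for every `n ≥ 1`. -/
def LanguageConnected (X : Set (ℤ → Bool)) : Prop :=
  ∀ n : ℕ, 1 ≤ n → HammingConnected (Lang X n)

/-!
The example is the coding of an irrational rotation `t ↦ t + α` of the circle `ℝ / ℤ` by an arc
`[0, β)` with `β ∉ ℤ + ℤ α`. The word of length `n` read from `t` changes with `t` only when one of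
the points `t + k α`, `0 ≤ k < n`, crosses an endpoint of the arc. As `β ∉ ℤ + ℤ α`, two of these
points never do so simultaneously; hence words change one letter at a time and, `t` ranging over a
connected line, the language is connected. While `t` runs once around the circle there are only
`2 n` crossings, so the number of words grows linearly. Minimality comes from that of the rotation
together with right-continuity of the coding, and a nonzero period `p` of a coding would trap an
orbit of the rotation by `p α` on one side of the arc.
-/

open Asymptotics Filter Function Set SymbolicDynamics.FullShift Topology
open scoped Pointwise

/-! ### Subshifts generated by a shift-invariant set -/

theorem mem_closure_iff_forall_cylinder {G A : Type*} [TopologicalSpace A] [DiscreteTopology A]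
    {S : Set (G → A)} {x : G → A} :
    x ∈ closure S ↔ ∀ J : Finset G, ∃ y ∈ S, y ∈ cylinder J x := by
  refine ⟨fun hx J => ?_, fun h => mem_closure_iff.2 fun U hU hxU => ?_⟩
  · obtain ⟨y, hyJ, hyS⟩ := mem_closure_iff.1 hx _ (isOpen_cylinder J x) fun _ _ => rfl
    exact ⟨y, hyS, hyJ⟩
  · obtain ⟨J, V, hV, hVU⟩ := isOpen_pi_iff.1 hU x hxU
    obtain ⟨y, hyS, hyJ⟩ := h J
    exact ⟨y, hVU fun j hj => by simpa only [hyJ j hj] using (hV j hj).2, hyS⟩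

theorem shiftMap_eq_shift_one : shiftMap = shift (1 : ℤ) := by
  funext x n
  simp only [shiftMap, shift_apply, add_comm]

theorem shift_mem_of_image_shiftMap_eq {Y : Set (ℤ → Bool)} (hY : shiftMap '' Y = Y) {y : ℤ → Bool}
    (hy : y ∈ Y) (k : ℤ) : shift k y ∈ Y := by
  rw [shiftMap_eq_shift_one] at hY
  induction k with
  | zero => rwa [shift_zero]
  | succ i ih =>
    rw [shift_add, ← hY]
    exact mem_image_of_mem _ ih
  | pred i ih =>
    rw [← hY] at ih
    obtain ⟨z, hz, hzy⟩ := ih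
    rwa [sub_eq_add_neg, shift_add, ← hzy, ← shift_add, add_neg_cancel, shift_zero]

theorem isSubshift_closure {S : Set (ℤ → Bool)} (hne : S.Nonempty) (hS : shiftMap '' S = S) :
    IsSubshift (closure S) := by
  have hshift (k : ℤ) : MapsTo (shift k) (closure S) (closure S) :=
    MapsTo.closure (fun _ hx => shift_mem_of_image_shiftMap_eq hS hx k) (continuous_shift k)
  refine ⟨hne.closure, isClosed_closure, ?_⟩
  rw [shiftMap_eq_shift_one]
  refine (hshift 1).image_subset.antisymm fun x hx => ⟨shift (-1) x, hshift (-1) hx, ?_⟩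
  rw [← shift_add, neg_add_cancel, shift_zero]

/-- Uniform recurrence of a set of points: every finite pattern of a point of `S` occurs in all
points of `S`, at a position taken from a finite set that depends only on the pattern. -/
def IsUniformlyRecurrent (S : Set (ℤ → Bool)) : Prop :=
  ∀ s ∈ S, ∀ J : Finset ℤ, ∃ F : Finset ℤ, ∀ t ∈ S, ∃ p ∈ F, shift p t ∈ cylinder J s

theorem isMinimalSubshift_closure {S : Set (ℤ → Bool)} (hne : S.Nonempty)
    (hS : shiftMap '' S = S) (hrec : IsUniformlyRecurrent S) : IsMinimalSubshift (closure S) := by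
  refine ⟨isSubshift_closure hne hS, fun Y hYS hYc hY ⟨y, hy⟩ =>
    hYS.antisymm (closure_minimal (fun s hs => ?_) hYc)⟩
  rw [← hYc.closure_eq, mem_closure_iff_forall_cylinder]
  intro J
  obtain ⟨F, hF⟩ := hrec s hs J
  -- A point of `S` agreeing with `y` on the finite window `F + J` shares its occurrences of `s|J`.
  obtain ⟨t, ht, hty⟩ := mem_closure_iff_forall_cylinder.1 (hYS hy) (F + J)
  obtain ⟨p, hp, hpt⟩ := hF t ht
  refine ⟨shift p y, shift_mem_of_image_shiftMap_eq hY hy p, fun j hj => ?_⟩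
  calc y (p + j) = t (p + j) := (hty _ (Finset.add_mem_add hp hj)).symm
    _ = s j := hpt j hj

theorem infinite_of_forall_not_periodic {X : Set (ℤ → Bool)} (hX : shiftMap '' X = X)
    {x : ℤ → Bool} (hx : x ∈ X) (hper : ∀ p : ℤ, p ≠ 0 → ¬ Periodic x p) : X.Infinite := by
  refine infinite_of_injective_forall_mem (f := fun k : ℤ => shift k x) (fun k l hkl => ?_)
    (shift_mem_of_image_shiftMap_eq hX hx)
  by_contra hne
  refine hper (l - k) (sub_ne_zero.2 (Ne.symm hne)) fun n => ?_
  have h := congrFun hkl (n - k)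
  simp only [shift_apply] at h
  rw [show n + (l - k) = l + (n - k) by ring, ← h, add_sub_cancel]

/-! ### Languages -/

/-- The word `x₀ x₁ ⋯ xₙ₋₁` read in the two-sided sequence `x`. -/
def initialWord (n : ℕ) (x : ℤ → Bool) : Fin n → Bool := fun k => x (k : ℕ)

theorem lang_eq_image_initialWord (X : Set (ℤ → Bool)) (n : ℕ) :
    Lang X n = initialWord n '' X := by
  ext w
  simp only [Lang, initialWord, mem_ofPred_eq, mem_image, funext_iff, eq_comm]

theorem lang_closure (S : Set (ℤ → Bool)) (n : ℕ) : Lang (closure S) n = Lang S n := by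
  have hcont : Continuous (initialWord n) := continuous_pi fun k => continuous_apply _
  simp only [lang_eq_image_initialWord]
  refine Subset.antisymm ?_ (image_mono subset_closure)
  simpa only [closure_discrete] using image_closure_subset_closure_image (s := S) hcont

theorem hammingConnected_range {T : Type*} [TopologicalSpace T] [PreconnectedSpace T] {n : ℕ}
    {f : T → Fin n → Bool} (hf : ∀ t, ∀ᶠ u in 𝓝 t, hammingDist (f t) (f u) ≤ 1) :
    HammingConnected (range f) := by
  rintro _ ⟨s, rfl⟩ _ ⟨t, rfl⟩
  refine PreconnectedSpace.induction₂' (fun s t => Relation.ReflTransGen _ (f s) (f t))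
    (fun t => ?_) ⟨fun _ _ _ => Relation.ReflTransGen.trans⟩ s t
  filter_upwards [hf t] with u hu
  rcases Nat.le_one_iff_eq_zero_or_eq_one.1 hu with h | h
  · rw [hammingDist_eq_zero.1 h]
    exact ⟨.refl, .refl⟩
  · exact ⟨.single ⟨mem_range_self t, mem_range_self u, h⟩,
      .single ⟨mem_range_self u, mem_range_self t, hammingDist_comm (f t) (f u) ▸ h⟩⟩

theorem tendsto_log_div_zero_of_isBigO_pow {u : ℕ → ℕ} {d : ℕ}
    (hu : (fun n => (u n : ℝ)) =O[atTop] fun n => (n : ℝ) ^ d) :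
    Tendsto (fun n => Real.log (u n) / n) atTop (𝓝 0) := by
  obtain ⟨C, hC, hbound⟩ := hu.exists_pos
  have hlog : Tendsto (fun n : ℕ => Real.log n / n) atTop (𝓝 0) :=
    Real.isLittleO_log_id_atTop.tendsto_div_nhds_zero.comp tendsto_natCast_atTop_atTop
  have hmajorant : Tendsto (fun n : ℕ => Real.log (max C 1) / n + d * (Real.log n / n)) atTop
      (𝓝 0) := by
    simpa using (tendsto_const_div_atTop_nhds_zero_nat _).add (hlog.const_mul (d : ℝ))
  refine squeeze_zero' (.of_forall fun n => by positivity) ?_ hmajorant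
  filter_upwards [hbound.bound, eventually_ge_atTop 1] with n hn hn1
  have hn0 : (0 : ℝ) < n := by exact_mod_cast hn1
  have hun : (u n : ℝ) ≤ max C 1 * n ^ d := by
    rw [Real.norm_natCast, Real.norm_of_nonneg (by positivity)] at hn
    exact hn.trans (by gcongr; exact le_max_left C 1)
  rw [mul_div_assoc', ← add_div]
  gcongr
  rcases (u n).eq_zero_or_pos with h0 | hpos
  · rw [h0, Nat.cast_zero, Real.log_zero]
    have := Real.log_nonneg (le_max_right C 1)
    positivity
  · calc Real.log (u n) ≤ Real.log (max C 1 * n ^ d) :=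
          Real.log_le_log (by exact_mod_cast hpos) hun
      _ = Real.log (max C 1) + d * Real.log n := by
          rw [Real.log_mul (by positivity) (by positivity), Real.log_pow]

/-! ### Codings of a rotation -/

/-- The two-sided itinerary of `t` with respect to the arc `[0, β)` of the circle `ℝ / ℤ`, under
the rotation by `α`; circle points are represented by real numbers. -/
noncomputable def rotationCoding (α β t : ℝ) : ℤ → Bool :=
  fun n => decide (Int.fract (t + n * α) < β)

/-- The subshift generated by the codings of all the orbits of the rotation by `α` with respect to
the arc `[0, β)`. -/
def rotationSubshift (α β : ℝ) : Set (ℤ → Bool) := closure (range (rotationCoding α β))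

section RotationCoding

variable {α β : ℝ}

theorem rotationCoding_periodic (α β : ℝ) : Periodic (rotationCoding α β) 1 := by
  intro t
  funext n
  simp only [rotationCoding, add_right_comm t, Int.fract_add_one]

theorem shift_rotationCoding (α β t : ℝ) (p : ℤ) :
    shift p (rotationCoding α β t) = rotationCoding α β (t + p * α) := by
  funext n
  simp only [shift_apply, rotationCoding, Int.cast_add, add_mul, add_assoc]

theorem rotationCoding_mul (α β t : ℝ) (p n : ℤ) :
    rotationCoding (p * α) β t n = rotationCoding α β t (n * p) := by
  simp only [rotationCoding, Int.cast_mul, mul_assoc]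

theorem image_shiftMap_range_rotationCoding (α β : ℝ) :
    shiftMap '' range (rotationCoding α β) = range (rotationCoding α β) := by
  rw [shiftMap_eq_shift_one, ← range_comp]
  simp only [comp_def, shift_rotationCoding]
  exact (add_right_surjective _).range_comp (rotationCoding α β)

theorem fract_lt_iff_floor_sub_lt_floor (x β : ℝ) : Int.fract x < β ↔ ⌊x - β⌋ < ⌊x⌋ := by
  rw [Int.floor_lt, Int.fract, sub_lt_comm]

theorem rotationCoding_apply_eq {s t : ℝ} {n : ℤ} (h₀ : ⌊s + n * α⌋ = ⌊t + n * α⌋)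
    (hβ : ⌊s + n * α - β⌋ = ⌊t + n * α - β⌋) :
    rotationCoding α β s n = rotationCoding α β t n := by
  simp only [rotationCoding, fract_lt_iff_floor_sub_lt_floor, h₀, hβ]

theorem eventually_nhdsGE_floor_add_eq (t c : ℝ) : ∀ᶠ u in 𝓝[≥] t, ⌊u + c⌋ = ⌊t + c⌋ := by
  have hadd : Tendsto (· + c) (𝓝[≥] t) (𝓝[≥] (t + c)) :=
    (continuous_add_const c).continuousWithinAt.tendsto_nhdsWithin
      fun u (hu : t ≤ u) => add_le_add_left hu c
  exact tendsto_pure.1 ((tendsto_floor_right_pure_floor (t + c)).comp hadd)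

theorem eventually_nhdsGE_rotationCoding_mem_cylinder (α β t : ℝ) (J : Finset ℤ) :
    ∀ᶠ u in 𝓝[≥] t, rotationCoding α β u ∈ cylinder J (rotationCoding α β t) := by
  simp only [mem_cylinder, eventually_all_finset]
  intro j _
  filter_upwards [eventually_nhdsGE_floor_add_eq t (j * α),
    eventually_nhdsGE_floor_add_eq t (j * α - β)] with u h₀ hβ
  exact rotationCoding_apply_eq h₀ (by simpa only [add_sub_assoc] using hβ)

/-! ### Minimality and infinitude -/

theorem exists_finset_forall_add_zsmul_mem {G : Type*} [AddGroup G] [TopologicalSpace G]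
    [ContinuousAdd G] [CompactSpace G] {a : G} (ha : DenseRange (· • a : ℤ → G)) {U : Set G}
    (hU : IsOpen U) (hne : U.Nonempty) : ∃ F : Finset ℤ, ∀ x : G, ∃ p ∈ F, x + p • a ∈ U := by
  have hcover : (⋃ p : ℤ, {x : G | x + p • a ∈ U}) = univ := by
    refine eq_univ_of_forall fun x => mem_iUnion.2 ?_
    have hx : DenseRange fun p : ℤ => x + p • a :=
      (Homeomorph.addLeft x).surjective.denseRange.comp ha (Homeomorph.addLeft x).continuous
    exact hx.exists_mem_open hU hne
  obtain ⟨F, hF⟩ := isCompact_univ.elim_finite_subcover (fun p : ℤ => {x : G | x + p • a ∈ U})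
    (fun p => hU.preimage (continuous_add_const _)) hcover.ge
  exact ⟨F, fun x => by simpa using hF (mem_univ x)⟩

theorem isUniformlyRecurrent_range_rotationCoding (hα : Irrational α) (β : ℝ) :
    IsUniformlyRecurrent (range (rotationCoding α β)) := by
  rintro _ ⟨s, rfl⟩ J
  obtain ⟨e, hse, he⟩ := mem_nhdsGE_iff_exists_Ico_subset.1
    (eventually_nhdsGE_rotationCoding_mem_cylinder α β s J)
  have hdense : DenseRange (· • (α : AddCircle (1 : ℝ)) : ℤ → AddCircle (1 : ℝ)) :=
    AddCircle.denseRange_zsmul_coe_iff.2 (by rwa [div_one])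
  obtain ⟨F, hF⟩ := exists_finset_forall_add_zsmul_mem hdense
    (QuotientAddGroup.isOpenMap_coe _ isOpen_Ioo) ((nonempty_Ioo.2 hse).image _)
  refine ⟨F, ?_⟩
  rintro _ ⟨t, rfl⟩
  obtain ⟨p, hp, u, hu, hut⟩ := hF t
  have hcode : rotationCoding α β u = rotationCoding α β (t + p * α) := by
    rw [← zsmul_eq_mul]
    exact congrArg (rotationCoding_periodic α β).lift hut
  refine ⟨p, hp, ?_⟩
  rw [shift_rotationCoding, ← hcode]
  exact he (Ioo_subset_Ico_self hu)

theorem isMinimalSubshift_rotationSubshift (hα : Irrational α) (β : ℝ) :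
    IsMinimalSubshift (rotationSubshift α β) :=
  isMinimalSubshift_closure (range_nonempty _) (image_shiftMap_range_rotationCoding α β)
    (isUniformlyRecurrent_range_rotationCoding hα β)

theorem exists_rotationCoding_apply_eq (hα : Irrational α) (hβ₀ : 0 < β) (hβ₁ : β < 1) (t : ℝ)
    (b : Bool) : ∃ n : ℤ, rotationCoding α β t n = b := by
  obtain ⟨s, hs⟩ : ∃ s, rotationCoding α β s 0 = b := by
    cases b
    · exact ⟨β, by simp [rotationCoding, Int.fract_eq_self.2 ⟨hβ₀.le, hβ₁⟩]⟩
    · exact ⟨0, by simp [rotationCoding, hβ₀]⟩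
  obtain ⟨F, hF⟩ := isUniformlyRecurrent_range_rotationCoding hα β _ (mem_range_self s) {0}
  obtain ⟨p, -, hp⟩ := hF _ (mem_range_self t)
  exact ⟨p, by simpa [hs] using hp 0 (Finset.mem_singleton_self 0)⟩

theorem not_periodic_rotationCoding (hα : Irrational α) (hβ₀ : 0 < β) (hβ₁ : β < 1) (t : ℝ) {p : ℤ}
    (hp : p ≠ 0) : ¬ Periodic (rotationCoding α β t) p := by
  intro hper
  obtain ⟨n, hn⟩ :=
    exists_rotationCoding_apply_eq (hα.intCast_mul hp) hβ₀ hβ₁ t (!rotationCoding α β t 0)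
  rw [rotationCoding_mul, ← Int.cast_id (n := n), hper.int_mul_eq n] at hn
  exact (Bool.eq_not_self _).1 hn

theorem infinite_rotationSubshift (hα : Irrational α) (hβ₀ : 0 < β) (hβ₁ : β < 1) :
    (rotationSubshift α β).Infinite :=
  infinite_of_forall_not_periodic (isMinimalSubshift_rotationSubshift hα β).1.2.2
    (subset_closure (mem_range_self 0)) fun _ hp => not_periodic_rotationCoding hα hβ₀ hβ₁ 0 hp

/-! ### Connectedness of the language -/

theorem lang_rotationSubshift (α β : ℝ) (n : ℕ) :
    Lang (rotationSubshift α β) n = range fun t => initialWord n (rotationCoding α β t) := by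
  rw [rotationSubshift, lang_closure, lang_eq_image_initialWord, ← range_comp, comp_def]

/-- The real numbers lying over an endpoint of the arc `[0, β)` of the circle `ℝ / ℤ`. -/
def arcEndpoints (β : ℝ) : Set ℝ := range (fun m : ℤ => (m : ℝ)) ∪ range (fun m : ℤ => m + β)

theorem eventually_floor_eq {x : ℝ} (hx : x ∉ range (fun m : ℤ => (m : ℝ))) :
    ∀ᶠ u in 𝓝 x, ⌊u⌋ = ⌊x⌋ := by
  have hlt : (⌊x⌋ : ℝ) < x := (Int.floor_le x).lt_of_ne fun h => hx ⟨_, h⟩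
  filter_upwards [Ioo_mem_nhds hlt (Int.lt_floor_add_one x)] with u hu
  exact Int.floor_eq_iff.2 ⟨hu.1.le, hu.2⟩

theorem eventually_rotationCoding_apply_eq {t : ℝ} {n : ℤ} (h : t + n * α ∉ arcEndpoints β) :
    ∀ᶠ u in 𝓝 t, rotationCoding α β u n = rotationCoding α β t n := by
  have h₀ : t + n * α ∉ range (fun m : ℤ => (m : ℝ)) := fun hm => h (.inl hm)
  have hβ : t + n * α - β ∉ range (fun m : ℤ => (m : ℝ)) := by
    rintro ⟨m, hm⟩
    exact h (.inr ⟨m, eq_sub_iff_add_eq.1 hm⟩)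
  have hcont₀ : ContinuousAt (fun u => u + n * α) t := by fun_prop
  have hcontβ : ContinuousAt (fun u => u + n * α - β) t := by fun_prop
  filter_upwards [hcont₀.eventually (eventually_floor_eq h₀),
    hcontβ.eventually (eventually_floor_eq hβ)] with u hu₀ huβ
  exact rotationCoding_apply_eq hu₀ huβ

theorem eq_of_add_mul_mem_arcEndpoints (hα : Irrational α) (hβ : ∀ a b : ℤ, β ≠ a + b * α) {t : ℝ}
    {j k : ℤ} (hj : t + j * α ∈ arcEndpoints β) (hk : t + k * α ∈ arcEndpoints β) : j = k := by
  by_contra hjk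
  have hirr : Irrational ((j - k : ℤ) * α) := hα.intCast_mul (sub_ne_zero.2 hjk)
  rcases hj with ⟨a, ha⟩ | ⟨a, ha⟩ <;> rcases hk with ⟨b, hb⟩ | ⟨b, hb⟩
  · exact hirr.ne_int (a - b) (by push_cast; linarith)
  · exact hβ (a - b) (k - j) (by push_cast; linarith)
  · exact hβ (b - a) (j - k) (by push_cast; linarith)
  · exact hirr.ne_int (a - b) (by push_cast; linarith)

theorem eventually_hammingDist_initialWord_le_one (hα : Irrational α)
    (hβ : ∀ a b : ℤ, β ≠ a + b * α) (n : ℕ) (t : ℝ) :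
    ∀ᶠ u in 𝓝 t, hammingDist (initialWord n (rotationCoding α β t))
      (initialWord n (rotationCoding α β u)) ≤ 1 := by
  have hstable : ∀ᶠ u in 𝓝 t, ∀ k : Fin n, t + (k : ℤ) * α ∉ arcEndpoints β →
      rotationCoding α β u k = rotationCoding α β t k :=
    eventually_all.2 fun k => eventually_imp_distrib_left.2 eventually_rotationCoding_apply_eq
  filter_upwards [hstable] with u hu
  have hend {k : Fin n} (hk : initialWord n (rotationCoding α β t) k ≠
      initialWord n (rotationCoding α β u) k) : t + (k : ℤ) * α ∈ arcEndpoints β :=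
    not_imp_comm.1 (hu k) (Ne.symm hk)
  refine Finset.card_le_one.2 fun j hj k hk => ?_
  have hjk := eq_of_add_mul_mem_arcEndpoints hα hβ (hend (Finset.mem_filter.1 hj).2)
    (hend (Finset.mem_filter.1 hk).2)
  exact Fin.ext (Int.natCast_inj.1 hjk)

theorem languageConnected_rotationSubshift (hα : Irrational α) (hβ : ∀ a b : ℤ, β ≠ a + b * α) :
    LanguageConnected (rotationSubshift α β) := by
  intro n _
  rw [lang_rotationSubshift]
  exact hammingConnected_range (eventually_hammingDist_initialWord_le_one hα hβ n)

/-! ### Linear complexity -/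

/-- Up to an additive constant, the number of times one of the points `t + k α`, `0 ≤ k < n`, has
crossed an endpoint of the arc `[0, β)` while `t` increased along `ℝ`. The two floors jump when
`t + k α` passes `ℤ` and `β + ℤ` respectively. -/
noncomputable def crossingCount (α β : ℝ) (n : ℕ) (t : ℝ) : ℤ :=
  ∑ k ∈ Finset.range n, (⌊t + (k : ℤ) * α⌋ + ⌊t + (k : ℤ) * α - β⌋)

theorem crossingCount_monotone (α β : ℝ) (n : ℕ) : Monotone (crossingCount α β n) := by
  intro s t hst
  unfold crossingCount
  gcongr

theorem crossingCount_one (α β : ℝ) (n : ℕ) :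
    crossingCount α β n 1 = crossingCount α β n 0 + 2 * n := by
  have hterm (x : ℝ) : ⌊1 + x⌋ + ⌊1 + x - β⌋ = ⌊0 + x⌋ + ⌊0 + x - β⌋ + 2 := by
    rw [add_sub_assoc, add_comm 1 x, add_comm 1 (x - β), Int.floor_add_one, Int.floor_add_one,
      zero_add]
    ring
  simp only [crossingCount, hterm, Finset.sum_add_distrib, Finset.sum_const, Finset.card_range,
    mul_comm, nsmul_eq_mul]

theorem initialWord_factorsThrough_crossingCount (α β : ℝ) (n : ℕ) :
    FactorsThrough (fun t => initialWord n (rotationCoding α β t)) (crossingCount α β n) := by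
  intro s t hst
  wlog hle : s ≤ t generalizing s t
  · exact (this hst.symm (le_of_not_ge hle)).symm
  have hfloor (c : ℝ) : ⌊s + c⌋ ≤ ⌊t + c⌋ := Int.floor_mono (add_le_add_left hle c)
  have hfloorβ (c : ℝ) : ⌊s + c - β⌋ ≤ ⌊t + c - β⌋ := by gcongr
  have hterm := (Finset.sum_eq_sum_iff_of_le fun _ _ => add_le_add (hfloor _) (hfloorβ _)).1 hst
  funext k
  obtain ⟨h₀, hβ⟩ :=
    (add_eq_add_iff_eq_and_eq (hfloor _) (hfloorβ _)).1 (hterm k (Finset.mem_range.2 k.2))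
  exact rotationCoding_apply_eq h₀ hβ

theorem ncard_lang_rotationSubshift_le (α β : ℝ) (n : ℕ) :
    (Lang (rotationSubshift α β) n).ncard ≤ 2 * n + 1 := by
  obtain ⟨e, he⟩ := (factorsThrough_iff _).1 (initialWord_factorsThrough_crossingCount α β n)
  have hlang : Lang (rotationSubshift α β) n = e '' (crossingCount α β n '' Icc 0 1) := by
    have hper := ((rotationCoding_periodic α β).comp (initialWord n)).image_Icc one_pos 0
    rw [zero_add] at hper
    rw [lang_rotationSubshift, ← image_comp, ← he]
    exact hper.symm
  have hcount : crossingCount α β n '' Icc 0 1 ⊆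
      Finset.Icc (crossingCount α β n 0) (crossingCount α β n 0 + 2 * n) := by
    rw [Finset.coe_Icc, ← crossingCount_one]
    exact (crossingCount_monotone α β n).image_Icc_subset
  calc (Lang (rotationSubshift α β) n).ncard
      ≤ (crossingCount α β n '' Icc 0 1).ncard := by
        rw [hlang]
        exact ncard_image_le ((Finset.finite_toSet _).subset hcount)
    _ ≤ (Finset.Icc (crossingCount α β n 0) (crossingCount α β n 0 + 2 * n)).card := by
        rw [← ncard_coe_finset]
        exact ncard_le_ncard hcount
    _ = 2 * n + 1 := by
        rw [Int.card_Icc]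
        omega

theorem tendsto_log_ncard_lang_rotationSubshift (α β : ℝ) :
    Tendsto (fun n : ℕ => Real.log ((Lang (rotationSubshift α β) n).ncard) / (n : ℝ))
      atTop (𝓝 0) := by
  refine tendsto_log_div_zero_of_isBigO_pow (d := 1) (.of_bound 3 ?_)
  filter_upwards [eventually_ge_atTop 1] with n hn
  rw [pow_one, Real.norm_natCast, Real.norm_natCast]
  have hcard := ncard_lang_rotationSubshift_le α β n
  exact_mod_cast (show _ ≤ 3 * n by omega)

end RotationCoding

theorem ratCast_ne_intCast_add_intCast_mul {α : ℝ} (hα : Irrational α) {q : ℚ} (hq : q.den ≠ 1)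
    (a b : ℤ) : (q : ℝ) ≠ a + b * α := by
  intro h
  rcases eq_or_ne b 0 with rfl | hb
  · have hqa : q = a := by exact_mod_cast (by simpa using h : (q : ℝ) = a)
    exact hq (hqa ▸ Rat.den_intCast a)
  · exact ((hα.intCast_mul hb).intCast_add a).ne_rat q h.symm

theorem exists_minimal_language_connected_zero_entropy :
    ∃ X : Set (ℤ → Bool), IsMinimalSubshift X ∧ X.Infinite ∧ LanguageConnected X ∧
      Filter.Tendsto (fun n : ℕ => Real.log ((Lang X n).ncard) / (n : ℝ))
        Filter.atTop (nhds 0) := by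
  have hα : Irrational √2 := irrational_sqrt_two
  have hβ (a b : ℤ) : (1 / 2 : ℝ) ≠ a + b * √2 := by
    simpa using ratCast_ne_intCast_add_intCast_mul (q := 1 / 2) hα (by norm_num) a b
  exact ⟨rotationSubshift √2 (1 / 2), isMinimalSubshift_rotationSubshift hα _,
    infinite_rotationSubshift hα (by norm_num) (by norm_num),
    languageConnected_rotationSubshift hα hβ, tendsto_log_ncard_lang_rotationSubshift _ _⟩
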